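/- For all complex k, the double integral ∫₀^∞ ∫₀^∞ e^{-x} E_{1/4}(-u) (log(i u x^{-1/4}))^k / (u^{1/2} x^{1/8}) du dx equals i^k 2^{2k+1} π^{k+1} (ζ(-k, 3/8) - ζ(-k, 7/8)), where ζ(s,v) is the Hurwitz zeta function. -/

import Mathlib

open MeasureTheory Real Set Complex

/-- The Mittag-Leffler function `E_b(z) = ∑_{n=0}^∞ z^n / Γ(b n + 1)`. -/
noncomputable def mittagLeffler (b z : ℂ) : ℂ :=
  ∑' n : ℕ, z ^ n / Complex.Gamma (b * n + 1)


lemma ML_cgamma_integrable {s : ℝ} (hs : 0 < s) {c : ℝ} (hc : 0 < c) :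
    IntegrableOn (fun w : ℝ => w ^ (s - 1) * Real.exp (-c * w)) (Ioi 0) := by
  have := integrableOn_rpow_mul_exp_neg_mul_rpow (s := s - 1) (p := 1) (by linarith) one_pos hc
  simpa using this

lemma ML_meas {s : ℂ} (r : ℂ) : AEStronglyMeasurable
    (fun w : ℝ => (w : ℂ) ^ (s - 1) * Complex.exp (-(r * w))) (volume.restrict (Ioi 0)) := by
  refine ContinuousOn.aestronglyMeasurable ?_ measurableSet_Ioi
  refine ContinuousOn.mul (fun w hw => ?_) (by fun_prop)
  exact (Complex.continuousAt_ofReal_cpow_const _ _ (Or.inr (ne_of_gt hw))).continuousWithinAt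

lemma ML_cgamma_norm {s : ℂ} (r : ℂ) {w : ℝ} (hw : 0 < w) :
    ‖(w : ℂ) ^ (s - 1) * Complex.exp (-(r * w))‖ = w ^ (s.re - 1) * Real.exp (-r.re * w) := by
  rw [norm_mul, Complex.norm_cpow_eq_rpow_re_of_pos hw, Complex.norm_exp]
  simp

lemma ML_cgamma_diff {s : ℂ} (hs : 0 < s.re) {r : ℂ} (hr : 0 < r.re) :
    DifferentiableAt ℂ (fun r : ℂ => ∫ w : ℝ in Ioi 0, (w : ℂ) ^ (s - 1) * Complex.exp (-(r * w))) r := by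
  have key := hasDerivAt_integral_of_dominated_loc_of_deriv_le (μ := volume.restrict (Ioi (0:ℝ)))
    (F := fun (r : ℂ) (w : ℝ) => (w : ℂ) ^ (s - 1) * Complex.exp (-(r * w)))
    (F' := fun (r : ℂ) (w : ℝ) => (w : ℂ) ^ (s - 1) * (Complex.exp (-(r * w)) * (-w)))
    (x₀ := r) (s := {z : ℂ | r.re / 2 < z.re})
    (bound := fun w => w ^ (s.re + 1 - 1) * Real.exp (-(r.re/2) * w))
    ?_ (Filter.Eventually.of_forall fun x => ML_meas x) ?_ ?_ ?_ ?_ ?_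
  · exact key.2.differentiableAt
  · exact (isOpen_lt continuous_const Complex.continuous_re).mem_nhds (by simp; linarith)
  · refine ((ML_cgamma_integrable hs hr)).mono' (ML_meas r) ?_
    filter_upwards [ae_restrict_mem measurableSet_Ioi] with w hw
    rw [ML_cgamma_norm r hw]
  · refine ((ML_meas (s := s) r).mul (g := fun w : ℝ => -(w:ℂ)) (by fun_prop)).congr ?_
    filter_upwards with w
    simp [mul_assoc]
  · filter_upwards [ae_restrict_mem measurableSet_Ioi] with w hw x hx
    have hw' : 0 < w := hw
    rw [← mul_assoc, norm_mul, ML_cgamma_norm x hw, norm_neg, Complex.norm_real, Real.norm_of_nonneg hw'.le,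
      mul_right_comm, show s.re + 1 - 1 = (s.re - 1) + 1 by ring, Real.rpow_add hw', Real.rpow_one]
    have hx : r.re / 2 < x.re := hx
    gcongr
  · exact ML_cgamma_integrable (by linarith) (by linarith)
  · filter_upwards with w x hx
    refine HasDerivAt.const_mul _ (HasDerivAt.cexp ?_)
    have h := ((hasDerivAt_id x).mul_const (w:ℂ)).neg
    rw [one_mul] at h
    exact h

lemma ML_cgamma {s : ℂ} (hs : 0 < s.re) {r : ℂ} (hr : 0 < r.re) :
    ∫ w : ℝ in Ioi 0, (w : ℂ) ^ (s - 1) * Complex.exp (-(r * w)) = r ^ (-s) * Complex.Gamma s := by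
  have hop : IsOpen {z : ℂ | 0 < z.re} := isOpen_lt continuous_const Complex.continuous_re
  have hconn : IsPreconnected {z : ℂ | 0 < z.re} := (convex_halfSpace_re_gt 0).isPreconnected
  have hf : AnalyticOnNhd ℂ (fun r : ℂ => ∫ w : ℝ in Ioi 0, (w : ℂ) ^ (s - 1) * Complex.exp (-(r * w)))
      {z : ℂ | 0 < z.re} := by
    refine DifferentiableOn.analyticOnNhd (fun z hz => (ML_cgamma_diff hs hz).differentiableWithinAt) hop
  have hg : AnalyticOnNhd ℂ (fun r : ℂ => r ^ (-s) * Complex.Gamma s) {z : ℂ | 0 < z.re} := by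
    refine DifferentiableOn.analyticOnNhd (fun z hz => ?_) hop
    refine DifferentiableAt.differentiableWithinAt ?_
    refine DifferentiableAt.mul_const ?_ _
    exact differentiableAt_id.cpow_const (Or.inl hz)
  refine hf.eqOn_of_preconnected_of_frequently_eq hg hconn (z₀ := 1) (by simp) ?_ hr
  have ht : Filter.Tendsto (fun n : ℕ => ((1 + 1 / ((n:ℝ) + 1) : ℝ) : ℂ)) Filter.atTop (nhdsWithin 1 {1}ᶜ) := by
    refine tendsto_nhdsWithin_iff.2 ⟨?_, ?_⟩
    · have := (tendsto_one_div_add_atTop_nhds_zero_nat (𝕜 := ℝ)).const_add 1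
      have h2 := (Complex.continuous_ofReal.tendsto _).comp this
      simpa [Function.comp_def] using! h2
    · filter_upwards with n
      have : (0:ℝ) < 1 / ((n:ℝ) + 1) := by positivity
      simp only [mem_compl_iff, mem_singleton_iff]
      norm_cast
      intro h
      have : (1 + 1 / ((n:ℝ) + 1)) = 1 := by exact_mod_cast h
      linarith
  refine ht.frequently (Filter.Eventually.frequently (Filter.Eventually.of_forall fun n => ?_))
  have hpos : (0:ℝ) < 1 + 1 / ((n:ℝ) + 1) := by positivity
  have := Complex.integral_cpow_mul_exp_neg_mul_Ioi hs hpos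
  rw [this, one_div, Complex.inv_cpow _ _ (by rw [Complex.arg_ofReal_of_nonneg hpos.le]; exact pi_pos.ne), Complex.cpow_neg]

lemma ML_image : Set.image (fun t : ℝ => t / (1 + t)) (Ioi 0) = Ioo 0 1 := by
  ext x
  simp only [mem_image, mem_Ioi, mem_Ioo]
  constructor
  · rintro ⟨t, ht, rfl⟩
    refine ⟨by positivity, ?_⟩
    rw [div_lt_one (by positivity)]; linarith
  · rintro ⟨h0, h1⟩
    refine ⟨x / (1 - x), div_pos h0 (by linarith), ?_⟩
    have : 1 - x ≠ 0 := by linarith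
    field_simp
    ring

lemma ML_beta {z : ℂ} (h0 : 0 < z.re) (h1 : z.re < 1) :
    ∫ t : ℝ in Ioi 0, (t : ℂ) ^ (z - 1) / (1 + t) = π / Complex.sin (π * z) := by
  rw [← Complex.Gamma_mul_Gamma_one_sub, Complex.Gamma_mul_Gamma_eq_betaIntegral h0 (by simpa using h1)]
  rw [add_sub_cancel, Complex.Gamma_one, one_mul, Complex.betaIntegral,
    intervalIntegral.integral_of_le zero_le_one, integral_Ioc_eq_integral_Ioo, ← ML_image]
  rw [integral_image_eq_integral_abs_deriv_smul (f' := fun t => 1 / (1 + t) ^ 2) measurableSet_Ioi]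
  · refine setIntegral_congr_fun measurableSet_Ioi (fun t ht => ?_)
    have ht : 0 < t := ht
    have ht1 : (0:ℝ) < 1 + t := by linarith
    have ht1' : (1 + t : ℂ) ≠ 0 := by exact_mod_cast ht1.ne'
    have e1 : (1 : ℂ) - ((t / (1 + t) : ℝ) : ℂ) = (((1 + t)⁻¹ : ℝ) : ℂ) := by
      push_cast; field_simp; ring
    have e2 : ((t / (1 + t) : ℝ) : ℂ) ^ (z - 1) = (t : ℂ) ^ (z - 1) * (((1 + t)⁻¹ : ℝ) : ℂ) ^ (z - 1) := by
      rw [div_eq_mul_inv, Complex.ofReal_mul, Complex.mul_cpow_ofReal_nonneg ht.le (by positivity)]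
    rw [e1, e2, mul_assoc, ← Complex.cpow_add _ _ (by exact_mod_cast (inv_pos.2 ht1).ne'),
      show z - 1 + (1 - z - 1) = -1 by ring, Complex.cpow_neg_one, abs_of_pos (by positivity), Complex.real_smul]
    push_cast
    field_simp
  · intro t ht
    have ht : 0 < t := ht
    have ht1 : (1:ℝ) + t ≠ 0 := by linarith
    refine HasDerivAt.hasDerivWithinAt ?_
    convert! (hasDerivAt_id t).div ((hasDerivAt_id t).const_add 1) ht1 using 1
    simp
  · intro a ha b hb hab
    have ha : 0 < a := ha
    have hb : 0 < b := hb
    simp only at hab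
    rw [div_eq_div_iff (by linarith) (by linarith)] at hab
    linarith

lemma ML_rint {a : ℝ} (h0 : 0 < a) (h1 : a < 1) :
    IntegrableOn (fun t : ℝ => t ^ (a - 1) / (1 + t)) (Ioi 0) := by
  have hm : ∀ s ⊆ Ioi (0:ℝ), MeasurableSet s → AEStronglyMeasurable (fun t : ℝ => t ^ (a - 1) / (1 + t)) (volume.restrict s) := by
    intro s hs hms
    refine ContinuousOn.aestronglyMeasurable ?_ hms
    refine ContinuousOn.div (fun t ht => ?_) (by fun_prop) (fun t ht => ?_)
    · exact (Real.continuousAt_rpow_const _ _ (Or.inl (ne_of_gt (hs ht)))).continuousWithinAt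
    · have : 0 < t := hs ht
      linarith
  rw [← Ioc_union_Ioi_eq_Ioi zero_le_one]
  refine IntegrableOn.union ?_ ?_
  · have := (intervalIntegral.intervalIntegrable_rpow' (a := 0) (b := 1) (r := a - 1) (by linarith))
    rw [intervalIntegrable_iff_integrableOn_Ioc_of_le zero_le_one] at this
    refine Integrable.mono' this (hm _ (fun t ht => ht.1) measurableSet_Ioc) ?_
    filter_upwards [ae_restrict_mem measurableSet_Ioc] with t ht
    have h : 0 < t := ht.1
    rw [Real.norm_of_nonneg (by positivity)]
    exact div_le_self (by positivity) (by linarith)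
  · refine Integrable.mono' (integrableOn_Ioi_rpow_of_lt (a := a - 2) (by linarith) one_pos)
      (hm _ (Ioi_subset_Ioi zero_le_one) measurableSet_Ioi) ?_
    filter_upwards [ae_restrict_mem measurableSet_Ioi] with t ht
    have h : 0 < t := lt_trans one_pos ht
    rw [Real.norm_of_nonneg (by positivity), show a - 2 = (a - 1) - 1 by ring, Real.rpow_sub h (a-1), Real.rpow_one]
    gcongr
    linarith

lemma ML_log {t : ℝ} (ht : 0 < t) : Complex.log (I * t) = I * (π / 2 - I * Real.log t) := by
  rw [mul_comm, Complex.log_ofReal_mul ht I_ne_zero, Complex.log_I]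
  ring_nf
  simp

lemma ML_log_re {t : ℝ} : (π / 2 - I * Real.log t : ℂ).re = π / 2 := by simp

lemma ML_log_norm {t : ℝ} (ht : 0 < t) : 1 ≤ ‖Complex.log (I * t)‖ := by
  rw [ML_log ht, norm_mul, norm_I, one_mul]
  refine le_trans ?_ (Complex.re_le_norm _)
  rw [ML_log_re]
  linarith [Real.pi_gt_three]

lemma ML_log_norm_le {t : ℝ} (ht : 0 < t) : ‖Complex.log (I * t)‖ ≤ |Real.log t| + 2 := by
  rw [ML_log ht, norm_mul, norm_I, one_mul]
  refine (norm_sub_le _ _).trans ?_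
  have : ‖(π / 2 : ℂ)‖ = π / 2 := by
    rw [norm_div, Complex.norm_real, Real.norm_of_nonneg pi_pos.le]; simp
  rw [this, norm_mul, norm_I, one_mul, Complex.norm_real, Real.norm_eq_abs]
  linarith [Real.pi_lt_four]

lemma ML_log_cpow {t : ℝ} (ht : 0 < t) (k : ℂ) :
    Complex.log (I * t) ^ k = I ^ k * (π / 2 - I * Real.log t) ^ k := by
  have hre : 0 < (π / 2 - I * Real.log t : ℂ).re := by rw [ML_log_re]; positivity
  have h1 : (π / 2 - I * Real.log t : ℂ) ≠ 0 := fun h => by rw [h] at hre; simp at hre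
  have h2 := Complex.abs_arg_lt_pi_div_two_iff.2 (Or.inl hre)
  rw [abs_lt] at h2
  have := Real.pi_pos
  rw [ML_log ht, Complex.cpow_def_of_ne_zero (mul_ne_zero I_ne_zero h1), Complex.cpow_def_of_ne_zero I_ne_zero,
    Complex.cpow_def_of_ne_zero h1, ← Complex.exp_add, Complex.log_mul I_ne_zero h1, add_mul]
  rw [Complex.arg_I]
  constructor <;> linarith

/-- growth bound -/
lemma ML_pow_bound (M : ℕ) : ∃ C : ℝ, 0 ≤ C ∧ ∀ t : ℝ, 0 < t →
    ‖Complex.log (I * t)‖ ^ M ≤ C * (t ^ (1/4 : ℝ) + t ^ (-(1/4) : ℝ)) := by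
  refine ⟨4 ^ M * M.factorial * Real.exp (1/2), by positivity, fun t ht => ?_⟩
  have h1 : ‖Complex.log (I * t)‖ ^ M ≤ (|Real.log t| + 2) ^ M := by
    gcongr
    exact ML_log_norm_le ht
  have h2 := Real.pow_div_factorial_le_exp (x := (|Real.log t| + 2) / 4) (by positivity) M
  rw [div_le_iff₀ (by positivity), div_pow, div_le_iff₀ (by positivity)] at h2
  have h3 : Real.exp ((|Real.log t| + 2) / 4) = Real.exp (1/2) * Real.exp (|Real.log t| / 4) := by
    rw [← Real.exp_add]; congr 1; ring
  have h4 : Real.exp (|Real.log t| / 4) ≤ t ^ (1/4 : ℝ) + t ^ (-(1/4) : ℝ) := by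
    rw [Real.rpow_def_of_pos ht, Real.rpow_def_of_pos ht]
    rcases abs_cases (Real.log t) with h | h
    · rw [h.1, show Real.log t / 4 = Real.log t * (1/4) by ring]
      linarith [Real.exp_pos (Real.log t * -(1/4))]
    · rw [h.1, show -Real.log t / 4 = Real.log t * (-(1/4)) by ring]
      linarith [Real.exp_pos (Real.log t * (1/4))]
  calc _ ≤ _ := h1
    _ ≤ _ := h2
    _ = (4 ^ M * M.factorial * Real.exp (1/2)) * Real.exp (|Real.log t| / 4) := by rw [h3]; ring
    _ ≤ _ := by gcongr

lemma ML_cpow_norm_le {t : ℝ} (ht : 0 < t) (k : ℂ) (N : ℕ) (hN : k.re ≤ N) (R : ℝ) (hR : |k.im| ≤ R) :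
    ‖Complex.log (I * t) ^ k‖ ≤ Real.exp (π * R) * ‖Complex.log (I * t)‖ ^ N := by
  have h1 := ML_log_norm ht
  have h0 : Complex.log (I * t) ≠ 0 := fun h => by rw [h] at h1; simp at h1; linarith
  rw [Complex.norm_cpow_of_ne_zero h0, div_eq_mul_inv, ← Real.exp_neg, mul_comm]
  gcongr
  · refine (neg_le_abs _).trans ?_
    rw [abs_mul]
    exact mul_le_mul (Complex.abs_arg_le_pi _) hR (abs_nonneg _) pi_pos.le
  · rw [← Real.rpow_natCast]
    exact Real.rpow_le_rpow_of_exponent_le h1 hN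

/-- weight -/
noncomputable def MLw (t : ℝ) : ℝ := t ^ (-(1/2) : ℝ) / (1 + t)

lemma MLw_nonneg {t : ℝ} (ht : 0 < t) : 0 ≤ MLw t := by unfold MLw; positivity

lemma MLw_bound_int (C : ℝ) : IntegrableOn (fun t : ℝ => C * (t ^ (1/4 : ℝ) + t ^ (-(1/4) : ℝ)) * MLw t) (Ioi 0) := by
  have := ((ML_rint (a := 3/4) (by norm_num) (by norm_num)).add (ML_rint (a := 1/4) (by norm_num) (by norm_num))).const_mul C
  refine IntegrableOn.congr_fun this (fun t ht => ?_) measurableSet_Ioi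
  have ht : 0 < t := ht
  simp only [Pi.add_apply, MLw]
  rw [show (3/4 - 1 : ℝ) = 1/4 + -(1/2) by norm_num, show (1/4 - 1 : ℝ) = -(1/4) + -(1/2) by norm_num, Real.rpow_add ht, Real.rpow_add ht]
  ring

lemma MLw_meas : AEStronglyMeasurable (fun t : ℝ => (MLw t : ℂ)) (volume.restrict (Ioi 0)) := by
  refine Measurable.aestronglyMeasurable ?_
  unfold MLw
  refine Complex.measurable_ofReal.comp ?_
  exact Measurable.div (by fun_prop) (by fun_prop)

lemma MLlog_meas (k : ℂ) : Measurable (fun t : ℝ => Complex.log (I * t) ^ k) := by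
  fun_prop

lemma MLPhi_int (k : ℂ) : IntegrableOn (fun t : ℝ => Complex.log (I * t) ^ k * (MLw t : ℂ)) (Ioi 0) := by
  obtain ⟨N, hN⟩ := exists_nat_ge k.re
  obtain ⟨C, hC, hb⟩ := ML_pow_bound N
  refine Integrable.mono' (MLw_bound_int (Real.exp (π * |k.im|) * C)) ((MLlog_meas k).aestronglyMeasurable.mul MLw_meas) ?_
  filter_upwards [ae_restrict_mem measurableSet_Ioi] with t ht
  rw [norm_mul, Complex.norm_real, Real.norm_of_nonneg (MLw_nonneg ht)]
  refine mul_le_mul_of_nonneg_right ?_ (MLw_nonneg ht)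
  refine (ML_cpow_norm_le ht k N hN _ le_rfl).trans ?_
  rw [mul_assoc]
  gcongr
  exact hb t ht

noncomputable def MLPhi (k : ℂ) : ℂ := ∫ t in Ioi (0:ℝ), Complex.log (I * t) ^ k * (MLw t : ℂ)

lemma MLPhi_diff : Differentiable ℂ MLPhi := by
  intro k
  obtain ⟨N, hN⟩ := exists_nat_ge (k.re + 1)
  obtain ⟨C, hC, hb⟩ := ML_pow_bound (N + 1)
  have key := hasDerivAt_integral_of_dominated_loc_of_deriv_le (μ := volume.restrict (Ioi (0:ℝ)))
    (F := fun (k : ℂ) (t : ℝ) => Complex.log (I * t) ^ k * (MLw t : ℂ))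
    (F' := fun (k : ℂ) (t : ℝ) => (Complex.log (I * t) ^ k * Complex.log (Complex.log (I * t))) * (MLw t : ℂ))
    (x₀ := k) (s := Metric.ball k 1)
    (bound := fun t => (Real.exp (π * (|k.im| + 1)) * (1 + π) * C) * (t ^ (1/4 : ℝ) + t ^ (-(1/4) : ℝ)) * MLw t)
    (Metric.ball_mem_nhds _ one_pos) (Filter.Eventually.of_forall fun x => (MLPhi_int x).1)
    (MLPhi_int k) ?_ ?_ (MLw_bound_int _) ?_
  · exact key.2.differentiableAt
  · refine AEStronglyMeasurable.mul ?_ MLw_meas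
    exact (Measurable.aestronglyMeasurable (by fun_prop))
  · filter_upwards [ae_restrict_mem measurableSet_Ioi] with t ht x hx
    have ht' : 0 < t := ht
    rw [norm_mul, Complex.norm_real, Real.norm_of_nonneg (MLw_nonneg ht)]
    refine mul_le_mul_of_nonneg_right ?_ (MLw_nonneg ht)
    have hx' : ‖x - k‖ < 1 := by simpa [dist_eq_norm] using hx
    have hre : x.re ≤ N := by
      have := (Complex.re_le_norm (x - k)); simp at this; linarith
    have him : |x.im| ≤ |k.im| + 1 := by
      have := (Complex.abs_im_le_norm (x - k)); simp at this
      have h3 : |x.im| ≤ |x.im - k.im| + |k.im| := by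
        simpa using abs_add_le (x.im - k.im) k.im
      linarith
    have hn1 := ML_log_norm ht'
    have hlog : ‖Complex.log (Complex.log (I * t))‖ ≤ (1 + π) * ‖Complex.log (I * t)‖ := by
      refine (Complex.norm_le_abs_re_add_abs_im _).trans ?_
      rw [Complex.log_re, Complex.log_im]
      have h1 := Complex.abs_arg_le_pi (Complex.log (I * t))
      have h2 := Real.log_le_self (norm_nonneg (Complex.log (I * t)))
      rw [abs_of_nonneg (Real.log_nonneg hn1)]
      nlinarith [pi_pos]
    rw [norm_mul]
    calc _ ≤ (Real.exp (π * (|k.im| + 1)) * ‖Complex.log (I * t)‖ ^ N) * ((1 + π) * ‖Complex.log (I * t)‖) :=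
          mul_le_mul (ML_cpow_norm_le ht' x N hre _ him) hlog (norm_nonneg _) (by positivity)
      _ = Real.exp (π * (|k.im| + 1)) * (1 + π) * ‖Complex.log (I * t)‖ ^ (N + 1) := by ring
      _ ≤ Real.exp (π * (|k.im| + 1)) * (1 + π) * (C * (t ^ (1/4 : ℝ) + t ^ (-(1/4) : ℝ))) := by
          have := pi_pos
          gcongr
          exact hb t ht
      _ = _ := by ring
  · filter_upwards [ae_restrict_mem measurableSet_Ioi] with t ht x hx
    have h1 := ML_log_norm ht
    have h0 : Complex.log (I * t) ≠ 0 := fun h => by rw [h] at h1; simp at h1; linarith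
    refine HasDerivAt.mul_const ?_ _
    simpa using (hasDerivAt_id x).const_cpow (c := Complex.log (I * t)) (Or.inl h0)

noncomputable def MLF (w : ℝ) : ℂ := Complex.exp (-(π/2 * w)) * (π / Complex.cosh (π * w))

lemma ML_sech (w : ℝ) : ∫ t : ℝ in Ioi 0, Complex.exp (I * Real.log t * w) * (MLw t : ℂ) = π / Complex.cosh (π * w) := by
  have h := ML_beta (z := 1/2 + I * w) (by simp) (by simp; norm_num)
  have e : Complex.sin (π * (1/2 + I * w)) = Complex.cosh (π * w) := by
    rw [show (π * (1/2 + I * w) : ℂ) = π * w * I + π / 2 by ring, Complex.sin_add_pi_div_two, Complex.cos_mul_I]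
  rw [e] at h
  rw [← h]
  refine setIntegral_congr_fun measurableSet_Ioi (fun t ht => ?_)
  have ht : 0 < t := ht
  have ht' : (t : ℂ) ≠ 0 := by exact_mod_cast ht.ne'
  simp only [MLw]
  rw [show (1/2 + I * w - 1 : ℂ) = I * w + ((-(1/2) : ℝ) : ℂ) by push_cast; ring, Complex.cpow_add _ _ ht',
    ← Complex.ofReal_cpow ht.le, Complex.cpow_def_of_ne_zero ht', ← Complex.ofReal_log ht.le]
  push_cast
  rw [show (I * Real.log t * w : ℂ) = Real.log t * (I * w) by ring]
  ring

lemma ML_swap {s : ℂ} (hs : 0 < s.re) :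
    MLPhi (-s) * Complex.Gamma s = I ^ (-s) * mellin MLF s := by
  have hstep : ∀ t ∈ Ioi (0:ℝ), Complex.log (I * t) ^ (-s) * (MLw t : ℂ) * Complex.Gamma s =
      I ^ (-s) * ∫ w : ℝ in Ioi 0, (w : ℂ) ^ (s - 1) * Complex.exp (-((π/2 - I * Real.log t) * w)) * (MLw t : ℂ) := by
    intro t ht
    have h := ML_cgamma hs (r := (π / 2 - I * Real.log t : ℂ)) (by rw [ML_log_re]; positivity)
    rw [integral_mul_const, h, ML_log_cpow ht]
    ring
  rw [MLPhi, ← integral_mul_const, setIntegral_congr_fun measurableSet_Ioi hstep, integral_const_mul]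
  congr 1
  rw [integral_integral_swap]
  · rw [mellin]
    refine setIntegral_congr_fun measurableSet_Ioi (fun w hw => ?_)
    simp only [MLF, smul_eq_mul]
    rw [← ML_sech, ← integral_const_mul, ← integral_const_mul]
    refine integral_congr_ae (Filter.Eventually.of_forall fun t => ?_)
    simp only
    rw [show (-((π/2 - I * Real.log t) * w) : ℂ) = -(π/2 * w) + I * Real.log t * w by ring, Complex.exp_add]
    ring
  · have hi : Integrable (fun p : ℝ × ℝ => MLw p.1 * (p.2 ^ (s.re - 1) * Real.exp (-(π/2) * p.2)))
        ((volume.restrict (Ioi 0)).prod (volume.restrict (Ioi 0))) := by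
      refine Integrable.mul_prod (f := MLw) (g := fun w => w ^ (s.re - 1) * Real.exp (-(π/2) * w)) ?_ (ML_cgamma_integrable hs (by positivity))
      have := ML_rint (a := 1/2) (by norm_num) (by norm_num)
      refine IntegrableOn.congr_fun this (fun t ht => ?_) measurableSet_Ioi
      simp only [MLw]; norm_num
    refine Integrable.mono' hi ?_ ?_
    · refine Measurable.aestronglyMeasurable ?_
      unfold MLw Function.uncurry
      refine Measurable.mul (by fun_prop) (Complex.measurable_ofReal.comp (Measurable.div (by fun_prop) (by fun_prop)))
    · rw [Measure.prod_restrict]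
      filter_upwards [ae_restrict_mem (measurableSet_Ioi.prod measurableSet_Ioi)] with p hp
      simp only [Function.uncurry]
      rw [norm_mul, ML_cgamma_norm _ hp.2, Complex.norm_real, Real.norm_of_nonneg (MLw_nonneg hp.1), ML_log_re, mul_comm]

lemma ML_F_hasSum {w : ℝ} (hw : 0 < w) :
    HasSum (fun n : ℕ => (2 * π * (-1) ^ n : ℂ) * Real.exp (-(2 * π * (n + 3/4)) * w)) (MLF w) := by
  have hpi := pi_pos
  have hlt : ‖-(Complex.exp (-(2 * π * w)))‖ < 1 := by
    rw [norm_neg, Complex.norm_exp]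
    simp
    positivity
  have h := (hasSum_geometric_of_norm_lt_one hlt).mul_left (2 * π * Complex.exp (-(3/2 * π * w)))
  convert! h using 1
  · ext n
    rw [neg_pow (Complex.exp _), ← Complex.exp_nat_mul, Complex.ofReal_exp]
    push_cast
    rw [show (-(2 * π * (n + 3/4)) * w : ℂ) = -(3/2*π*w) + n * (-(2*π*w)) by ring, Complex.exp_add]
    ring
  · rw [MLF, Complex.cosh]
    have e1 : (1 - -Complex.exp (-(2 * π * w)) : ℂ) ≠ 0 := by
      intro h0
      have : -Complex.exp (-(2 * π * w)) = 1 := by linear_combination -h0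
      rw [this] at hlt; simp at hlt
    have e2 : Complex.exp (π * w) + Complex.exp (-(π * w)) = Complex.exp (π * w) * (1 - -Complex.exp (-(2 * π * w))) := by
      rw [sub_neg_eq_add, mul_add, ← Complex.exp_add]; ring_nf
    have e3 : Complex.exp (-(π/2 * w)) = Complex.exp (-(3/2 * π * w)) * Complex.exp (π * w) := by
      rw [← Complex.exp_add]; ring_nf
    rw [e2, e3]
    have := Complex.exp_ne_zero (π * w)
    field_simp

lemma ML_mellin {s : ℂ} (hs : 1 < s.re) :
    mellin MLF s = Complex.Gamma s * (2 * π) * (4 * π : ℂ) ^ (-s) *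
      (HurwitzZeta.hurwitzZeta ((3 / 8 : ℝ) : UnitAddCircle) s -
            HurwitzZeta.hurwitzZeta ((7 / 8 : ℝ) : UnitAddCircle) s) := by
  have hpi := pi_pos
  have h := hasSum_mellin (a := fun n : ℕ => (2 * π * (-1) ^ n : ℂ)) (p := fun n : ℕ => 2 * π * (n + 3/4))
    (F := MLF) (s := s) (fun i => Or.inr (by positivity)) (by linarith) (fun t ht => ML_F_hasSum ht) ?_
  · refine h.unique ?_
    have key : ∀ b : ℝ, 0 < b → ∀ m : ℕ, (((4 * π * (m + b) : ℝ)) : ℂ) ^ s = (4 * π : ℂ) ^ s * (m + b : ℂ) ^ s := by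
      intro b hb m
      rw [Complex.ofReal_mul, Complex.mul_cpow_ofReal_nonneg (by positivity) (by positivity)]
      push_cast; rfl
    have h1 := (HurwitzZeta.hasSum_hurwitzZeta_of_one_lt_re (a := 3/8) (by norm_num) hs).mul_left
      (Complex.Gamma s * (2 * π) * (4 * π : ℂ) ^ (-s))
    have h2 := (HurwitzZeta.hasSum_hurwitzZeta_of_one_lt_re (a := 7/8) (by norm_num) hs).mul_left
      (-(Complex.Gamma s * (2 * π) * (4 * π : ℂ) ^ (-s)))
    have := HasSum.even_add_odd (f := fun n : ℕ => Complex.Gamma s * (2 * π * (-1) ^ n : ℂ) / ((2 * π * (n + 3/4) : ℝ) : ℂ) ^ s)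
      (m := _) (m' := _) (h1.congr_fun ?_) (h2.congr_fun ?_)
    · convert! this using 1; ring
    · intro m
      rw [show (2 * π * (((2 * m : ℕ) : ℝ) + 3/4) : ℝ) = 4 * π * (m + 3/8 : ℝ) by push_cast; ring, key _ (by norm_num), Complex.cpow_neg, pow_mul]
      simp [div_eq_mul_inv]; ring
    · intro m
      rw [show (2 * π * (((2 * m + 1 : ℕ) : ℝ) + 3/4) : ℝ) = 4 * π * (m + 7/8 : ℝ) by push_cast; ring, key _ (by norm_num), Complex.cpow_neg, pow_succ, pow_mul]
      simp [div_eq_mul_inv]; ring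
  · have h1 := (HurwitzZeta.hasSum_hurwitzZeta_of_one_lt_re (a := 3/4) (s := (s.re : ℂ)) (by norm_num) (by simpa using hs)).summable.norm.mul_left
      (2 * π * (2 * π) ^ (-s.re))
    refine h1.congr fun n => ?_
    rw [Real.mul_rpow (x := 2 * π) (y := n + 3/4) (by positivity) (by positivity), norm_div, show (n + (3/4 : ℝ) : ℂ) = ((n + 3/4 : ℝ) : ℂ) by push_cast; rfl,
      Complex.norm_cpow_eq_rpow_re_of_pos (by positivity), Real.rpow_neg (by positivity)]
    simp [abs_of_pos pi_pos]
    field_simp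

lemma MLPhi_eq (k : ℂ) : MLPhi k = I ^ k * 2 ^ (2 * k + 1) * (π : ℂ) ^ (k + 1) *
          (HurwitzZeta.hurwitzZeta ((3 / 8 : ℝ) : UnitAddCircle) (-k) -
            HurwitzZeta.hurwitzZeta ((7 / 8 : ℝ) : UnitAddCircle) (-k)) := by
  have hpi : (π : ℂ) ≠ 0 := by exact_mod_cast pi_pos.ne'
  have hg : Differentiable ℂ (fun k : ℂ => I ^ k * 2 ^ (2 * k + 1) * (π : ℂ) ^ (k + 1) *
          (HurwitzZeta.hurwitzZeta ((3 / 8 : ℝ) : UnitAddCircle) (-k) -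
            HurwitzZeta.hurwitzZeta ((7 / 8 : ℝ) : UnitAddCircle) (-k))) := by
    refine Differentiable.mul (Differentiable.mul (Differentiable.mul ?_ ?_) ?_) ?_
    · exact differentiable_id.const_cpow (Or.inl I_ne_zero)
    · exact Differentiable.const_cpow (by fun_prop) (Or.inl (by norm_num))
    · exact Differentiable.const_cpow (by fun_prop) (Or.inl hpi)
    · exact (HurwitzZeta.differentiable_hurwitzZeta_sub_hurwitzZeta _ _).comp differentiable_neg
  have hfa : AnalyticOnNhd ℂ MLPhi univ := MLPhi_diff.differentiableOn.analyticOnNhd isOpen_univ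
  have hga := hg.differentiableOn.analyticOnNhd isOpen_univ
  refine congrFun (hfa.eq_of_eventuallyEq hga (z₀ := -2) ?_) k
  have : ∀ᶠ z : ℂ in nhds (-2), z.re < -1 :=
    (isOpen_lt Complex.continuous_re continuous_const).mem_nhds (by simp)
  filter_upwards [this] with k hk
  have hs : 1 < (-k).re := by simp; linarith
  have h1 := ML_swap (s := -k) (by linarith)
  have hG : Complex.Gamma (-k) ≠ 0 := Complex.Gamma_ne_zero_of_re_pos (by linarith)
  rw [ML_mellin hs, neg_neg] at h1
  refine mul_right_cancel₀ hG ?_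
  rw [h1, Complex.cpow_add _ _ hpi, Complex.cpow_add _ _ two_ne_zero]
  have : (4 * π : ℂ) ^ k = 2 ^ (2 * k) * (π : ℂ) ^ k := by
    rw [show (4 * π : ℂ) = ((4:ℝ) : ℂ) * (π : ℂ) by push_cast; rfl, Complex.mul_cpow_ofReal_nonneg (by norm_num) pi_pos.le]
    congr 1
    rw [show ((4:ℝ):ℂ) = 2 ^ (2:ℂ) by norm_num [Complex.cpow_ofNat]]
    rw [two_mul, Complex.cpow_add _ _ two_ne_zero, Complex.cpow_ofNat, sq]
    rw [show (2 : ℂ) = ((2:ℝ):ℂ) by norm_num, Complex.mul_cpow_ofReal_nonneg (by norm_num) (by norm_num)]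
  rw [this]
  simp only [Complex.cpow_one]
  ring

noncomputable def MLG (a x : ℝ) : ℝ := ∫ s in (0:ℝ)..x, Real.exp (-s) * s ^ (a - 1)

lemma MLG_ii {a : ℝ} (ha : 0 < a) (x y : ℝ) :
    IntervalIntegrable (fun s : ℝ => Real.exp (-s) * s ^ (a - 1)) volume x y :=
  (intervalIntegral.intervalIntegrable_rpow' (by linarith)).continuousOn_mul (by fun_prop)

lemma MLG_cont {a : ℝ} (ha : 0 < a) : Continuous (MLG a) :=
  intervalIntegral.continuous_primitive (fun x y => MLG_ii ha x y) 0

lemma MLG_deriv {a x : ℝ} (ha : 0 < a) (hx : 0 < x) :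
    HasDerivAt (MLG a) (Real.exp (-x) * x ^ (a - 1)) x := by
  refine intervalIntegral.integral_hasDerivAt_right (MLG_ii ha 0 x) ?_ ?_
  · refine Measurable.stronglyMeasurable ?_ |>.stronglyMeasurableAtFilter
    fun_prop
  · exact ContinuousAt.mul (by fun_prop) (Real.continuousAt_rpow_const _ _ (Or.inl hx.ne'))

lemma MLG_nonneg {a x : ℝ} (hx : 0 < x) : 0 ≤ MLG a x := by
  refine intervalIntegral.integral_nonneg hx.le (fun s hs => ?_)
  have := hs.1
  positivity

lemma MLG_compl {a x : ℝ} (ha : 0 < a) (hx : 0 < x) :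
    Real.Gamma a - MLG a x = ∫ s in Ioi x, Real.exp (-s) * s ^ (a - 1) := by
  have h := Real.GammaIntegral_convergent ha
  rw [Real.Gamma_eq_integral ha, MLG, sub_eq_iff_eq_add', intervalIntegral.integral_of_le hx.le,
    ← Ioc_union_Ioi_eq_Ioi hx.le, setIntegral_union (Ioc_disjoint_Ioi le_rfl) measurableSet_Ioi]
  · exact h.mono_set Ioc_subset_Ioi_self
  · exact h.mono_set (Ioi_subset_Ioi hx.le)

lemma MLG_compl_nonneg {a x : ℝ} (ha : 0 < a) (hx : 0 < x) : 0 ≤ Real.Gamma a - MLG a x := by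
  rw [MLG_compl ha hx]
  refine setIntegral_nonneg measurableSet_Ioi (fun s hs => ?_)
  have : 0 < s := lt_trans hx hs
  positivity

lemma MLG_compl_le {a x : ℝ} (ha : 0 < a) (ha1 : a ≤ 1) (hx : 0 < x) :
    Real.Gamma a - MLG a x ≤ x ^ (a - 1) * Real.exp (-x) := by
  rw [MLG_compl ha hx, ← integral_exp_neg_Ioi, ← integral_const_mul]
  refine setIntegral_mono_on ((Real.GammaIntegral_convergent ha).mono_set (Ioi_subset_Ioi hx.le))
    ((integrableOn_exp_neg_Ioi x).const_mul _) measurableSet_Ioi (fun s hs => ?_)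
  rw [mul_comm]
  refine mul_le_mul_of_nonneg_right ?_ (Real.exp_pos _).le
  exact Real.rpow_le_rpow_of_nonpos hx (le_of_lt hs) (by linarith)

noncomputable def MLQ (a x : ℝ) : ℝ := Real.exp x * (1 - MLG a x / Real.Gamma a)

lemma MLQ_eq {a x : ℝ} (ha : 0 < a) : MLQ a x = Real.exp x * (Real.Gamma a - MLG a x) / Real.Gamma a := by
  have := Real.Gamma_pos_of_pos ha
  unfold MLQ; field_simp

lemma MLQ_nonneg {a x : ℝ} (ha : 0 < a) (hx : 0 < x) : 0 ≤ MLQ a x := by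
  rw [MLQ_eq ha]
  have := Real.Gamma_pos_of_pos ha
  have := MLG_compl_nonneg ha hx
  positivity

lemma MLQ_le_exp {a x : ℝ} (ha : 0 < a) (hx : 0 < x) : MLQ a x ≤ Real.exp x := by
  have := Real.Gamma_pos_of_pos ha
  have h2 : 0 ≤ MLG a x / Real.Gamma a := div_nonneg (MLG_nonneg hx) this.le
  unfold MLQ
  nlinarith [Real.exp_pos x]

lemma MLQ_le {a x : ℝ} (ha : 0 < a) (ha1 : a ≤ 1) (hx : 0 < x) : MLQ a x ≤ x ^ (a - 1) / Real.Gamma a := by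
  have := Real.Gamma_pos_of_pos ha
  rw [MLQ_eq ha]
  gcongr
  calc _ ≤ Real.exp x * (x ^ (a - 1) * Real.exp (-x)) := by gcongr; exact MLG_compl_le ha ha1 hx
    _ = _ := by rw [Real.exp_neg]; field_simp

lemma MLQ_cont {a : ℝ} (ha : 0 < a) : Continuous (MLQ a) := by
  unfold MLQ
  have := MLG_cont ha
  fun_prop

lemma MLQ_laplace_int {a T : ℝ} (ha : 0 < a) (ha1 : a ≤ 1) (hT : 0 < T) :
    IntegrableOn (fun x => Real.exp (-x) * MLQ a (T * x)) (Ioi 0) := by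
  have hG := Real.Gamma_pos_of_pos ha
  have h := (Real.GammaIntegral_convergent ha).mul_const (T ^ (a - 1) / Real.Gamma a)
  refine Integrable.mono' h ?_ ?_
  · have := MLQ_cont ha
    exact Continuous.aestronglyMeasurable (by fun_prop)
  · filter_upwards [ae_restrict_mem measurableSet_Ioi] with x hx
    have hx : 0 < x := hx
    have h1 := MLQ_nonneg ha (mul_pos hT hx)
    rw [Real.norm_of_nonneg (by positivity), mul_assoc]
    gcongr
    refine (MLQ_le ha ha1 (mul_pos hT hx)).trans (le_of_eq ?_)
    rw [Real.mul_rpow hT.le hx.le]; ring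

lemma MLQ_laplace {a T : ℝ} (ha : 0 < a) (ha1 : a < 1) (hT : 0 < T) (hT1 : T ≠ 1) :
    ∫ x in Ioi (0:ℝ), Real.exp (-x) * MLQ a (T * x) = (T ^ a - 1) / (T - 1) := by
  have hG := Real.Gamma_pos_of_pos ha
  have hT1' : T - 1 ≠ 0 := sub_ne_zero.2 hT1
  have hgi := (Real.GammaIntegral_convergent ha).const_mul (T ^ a / (Real.Gamma a * (T - 1)))
  have hqi := MLQ_laplace_int ha ha1.le hT
  have h := integral_Ioi_of_hasDerivAt_of_tendsto (a := 0) (m := 0)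
    (f := fun x => Real.exp (-x) * MLQ a (T * x) / (T - 1))
    (f' := fun x => Real.exp (-x) * MLQ a (T * x) - T ^ a / (Real.Gamma a * (T - 1)) * (Real.exp (-x) * x ^ (a - 1)))
    ?_ ?_ (hqi.sub hgi) ?_
  · rw [integral_sub hqi hgi, integral_const_mul, ← Real.Gamma_eq_integral ha] at h
    have h0 : MLQ a (T * 0) = 1 := by simp [MLQ, MLG]
    rw [h0] at h
    simp only [neg_zero, Real.exp_zero] at h
    rw [sub_eq_iff_eq_add] at h
    rw [h]
    field_simp
    ring
  · have := MLQ_cont ha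
    exact Continuous.continuousWithinAt (by fun_prop)
  · intro x hx
    have hx : 0 < x := hx
    have e : (fun x => Real.exp (-x) * MLQ a (T * x) / (T - 1)) =
        fun x => Real.exp ((T - 1) * x) * (1 - MLG a (T * x) / Real.Gamma a) / (T - 1) := by
      ext y
      unfold MLQ
      rw [← mul_assoc, ← Real.exp_add]
      congr 3; ring
    rw [e]
    have d1 : HasDerivAt (fun y => Real.exp ((T - 1) * y)) (Real.exp ((T - 1) * x) * (T - 1)) x := by
      have := ((hasDerivAt_id x).const_mul (T - 1)).exp
      simpa using this
    have d2 : HasDerivAt (fun y => MLG a (T * y)) (Real.exp (-(T * x)) * (T * x) ^ (a - 1) * T) x := by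
      have := (MLG_deriv ha (mul_pos hT hx)).comp x ((hasDerivAt_id x).const_mul T)
      simpa using! this
    have d3 := (d1.mul ((d2.div_const (Real.Gamma a)).const_sub 1)).div_const (T - 1)
    convert! d3 using 1
    have e1 : Real.exp (-x) * MLQ a (T * x) = Real.exp ((T - 1) * x) * (1 - MLG a (T * x) / Real.Gamma a) := by
      unfold MLQ
      rw [← mul_assoc, ← Real.exp_add]
      congr 2; ring
    have e2 : Real.exp (-x) = Real.exp ((T - 1) * x) * Real.exp (-(T * x)) := by
      rw [← Real.exp_add]; congr 1; ring
    have e3 : T ^ a = T ^ (a - 1) * T := by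
      rw [Real.rpow_sub_one hT.ne']; field_simp
    rw [e1, e2, e3, Real.mul_rpow hT.le hx.le]
    field_simp
    ring
  · have hlim : Filter.Tendsto (fun x : ℝ => Real.exp (-x) / |T - 1| * (T ^ (a-1) / Real.Gamma a)) Filter.atTop (nhds 0) := by
      have := (Real.tendsto_exp_neg_atTop_nhds_zero.div_const |T - 1|).mul_const (T ^ (a-1) / Real.Gamma a)
      simpa using this
    refine squeeze_zero_norm' ?_ hlim
    filter_upwards [Filter.eventually_ge_atTop 1] with x hx1
    have hx : 0 < x := by linarith
    have h1 := MLQ_nonneg ha (mul_pos hT hx)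
    rw [norm_div, Real.norm_eq_abs (T - 1), Real.norm_of_nonneg (by positivity), mul_div_right_comm]
    gcongr
    refine (MLQ_le ha ha1.le (mul_pos hT hx)).trans ?_
    rw [Real.mul_rpow hT.le hx.le]
    gcongr
    have : x ^ (a - 1) ≤ 1 := Real.rpow_le_one_of_one_le_of_nonpos hx1 (by linarith)
    have h3 : 0 < T ^ (a - 1) := by positivity
    nlinarith


lemma ML_series {a x : ℝ} (ha : 0 < a) (hx : 0 < x) :
    HasSum (fun n : ℕ => ((x ^ (a + n) : ℝ) : ℂ) / Complex.Gamma (a + n + 1))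
      (((Real.exp x * (MLG a x / Real.Gamma a) : ℝ)) : ℂ) := by
  have hG := Real.Gamma_pos_of_pos ha
  have hx0 : (x : ℂ) ≠ 0 := by exact_mod_cast hx.ne'
  have hrpow_ii : IntervalIntegrable (fun s : ℝ => s ^ (a - 1)) volume 0 x :=
    intervalIntegral.intervalIntegrable_rpow' (by linarith)
  have hexp : ∀ y : ℝ, HasSum (fun n : ℕ => y ^ n / (n.factorial : ℝ)) (Real.exp y) := by
    intro y
    rw [Real.exp_eq_exp_ℝ]
    exact NormedSpace.expSeries_div_hasSum_exp y
  have h := intervalIntegral.hasSum_integral_of_dominated_convergence (μ := volume) (a := 0) (b := x)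
    (F := fun (n : ℕ) (s : ℝ) => ((s : ℂ) ^ ((a : ℂ) - 1) * ((x : ℂ) - s) ^ (((n : ℂ) + 1) - 1)) * (1 / (n.factorial : ℂ)))
    (f := fun s : ℝ => ((Real.exp x * (Real.exp (-s) * s ^ (a - 1)) : ℝ) : ℂ))
    (fun n s => s ^ (a - 1) * (x ^ n / n.factorial)) ?_ ?_ ?_ ?_ ?_
  · have h2 := h.mul_left (1 / (Real.Gamma a : ℂ))
    convert! h2 using 1
    · ext n
      rw [intervalIntegral.integral_mul_const, Complex.betaIntegral_scaled _ _ hx,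
        Complex.betaIntegral_eq_Gamma_mul_div _ _ (by simpa using ha) (by simp; positivity),
        Complex.Gamma_nat_eq_factorial, Complex.Gamma_ofReal]
      have hn : (n.factorial : ℂ) ≠ 0 := by exact_mod_cast n.factorial_ne_zero
      have hG' : (Real.Gamma a : ℂ) ≠ 0 := by exact_mod_cast hG.ne'
      rw [Complex.ofReal_cpow hx.le]
      push_cast
      rw [show ((a:ℂ) + (n + 1) - 1) = a + n by ring, ← add_assoc]
      field_simp
    · rw [intervalIntegral.integral_ofReal, intervalIntegral.integral_const_mul]
      unfold MLG
      push_cast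
      ring
  · intro n
    refine Measurable.aestronglyMeasurable ?_
    fun_prop
  · intro n
    filter_upwards with s hs
    rw [uIoc_of_le hx.le] at hs
    have h0 : 0 < s := hs.1
    have h1 : 0 ≤ x - s := by linarith [hs.2]
    rw [add_sub_cancel_right, Complex.cpow_natCast, norm_mul, norm_mul, Complex.norm_cpow_eq_rpow_re_of_pos h0, norm_pow,
      ← Complex.ofReal_sub, Complex.norm_real, Real.norm_of_nonneg h1, mul_assoc]
    simp only [sub_re, ofReal_re, one_re, norm_div, norm_one, Complex.norm_natCast, mul_one_div]
    gcongr
    linarith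
  · filter_upwards with s hs
    exact ((hexp x).summable).mul_left _
  · refine (hrpow_ii.mul_const (Real.exp x)).congr ?_
    intro s hs
    simp only
    rw [tsum_mul_left, (hexp x).tsum_eq]
  · filter_upwards with s hs
    rw [uIoc_of_le hx.le] at hs
    have h0 : 0 < s := hs.1
    have h1 := (hexp (x - s)).mul_left (s ^ (a - 1))
    have h2 := (Complex.hasSum_ofReal.2 h1)
    convert! h2 using 1
    · ext n
      rw [add_sub_cancel_right, Complex.cpow_natCast]
      push_cast
      rw [Complex.ofReal_cpow h0.le]
      push_cast
      ring
    · rw [sub_eq_add_neg x s, Real.exp_add]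
      congr 1; ring

noncomputable def MLE (u : ℝ) : ℝ := MLQ (1/4) (u ^ 4) - MLQ (1/2) (u ^ 4) + MLQ (3/4) (u ^ 4)

lemma ML_eq {u : ℝ} (hu : 0 < u) : mittagLeffler (1/4) (-(u : ℂ)) = (MLE u : ℂ) := by
  have hx : 0 < u ^ 4 := by positivity
  have hp : ∀ (a : ℝ) (m n : ℕ), 4 * (a + n) = m → (u ^ 4 : ℝ) ^ (a + n : ℝ) = u ^ m := by
    intro a m n h
    rw [← Real.rpow_natCast u 4, ← Real.rpow_mul hu.le, ← Real.rpow_natCast]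
    congr 1
  have h1 := (ML_series (a := 1/4) (by norm_num) hx).neg
  have h2 := (ML_series (a := 1/2) (by norm_num) hx)
  have h3 := (ML_series (a := 3/4) (by norm_num) hx).neg
  have h0 : HasSum (fun n : ℕ => (((u ^ 4) ^ n / (n.factorial : ℝ) : ℝ) : ℂ)) (Real.exp (u ^ 4) : ℝ) := by
    refine Complex.hasSum_ofReal.2 ?_
    rw [Real.exp_eq_exp_ℝ]
    exact NormedSpace.expSeries_div_hasSum_exp _
  set f : ℕ → ℂ := fun n => (-(u : ℂ)) ^ n / Complex.Gamma (1/4 * n + 1) with hf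
  have he : HasSum (fun k => f (2 * k)) (((Real.exp (u ^ 4) : ℝ) : ℂ) +
      ((Real.exp (u ^ 4) * (MLG (1/2) (u ^ 4) / Real.Gamma (1/2)) : ℝ) : ℂ)) := by
    refine HasSum.even_add_odd (f := fun k => f (2 * k)) (h0.congr_fun ?_) (h2.congr_fun ?_)
    · intro n
      simp only [hf]
      rw [show (1/4 * ((2 * (2 * n) : ℕ) : ℂ) + 1) = (n : ℂ) + 1 by push_cast; ring, Complex.Gamma_nat_eq_factorial,
        show 2 * (2 * n) = 2 * n * 2 by ring, pow_mul', neg_sq, ← pow_mul, ← pow_mul]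
      push_cast
      congr 2; ring
    · intro n
      simp only [hf]
      rw [show (1/4 * ((2 * (2 * n + 1) : ℕ) : ℂ) + 1) = ((1/2 : ℝ) : ℂ) + n + 1 by push_cast; ring,
        hp (1/2) (2 * (2 * n + 1)) n (by push_cast; ring), pow_mul, neg_sq, ← pow_mul]
      push_cast
      rfl
  have ho : HasSum (fun k => f (2 * k + 1)) (-((Real.exp (u ^ 4) * (MLG (1/4) (u ^ 4) / Real.Gamma (1/4)) : ℝ) : ℂ) +
      -((Real.exp (u ^ 4) * (MLG (3/4) (u ^ 4) / Real.Gamma (3/4)) : ℝ) : ℂ)) := by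
    refine HasSum.even_add_odd (f := fun k => f (2 * k + 1)) (h1.congr_fun ?_) (h3.congr_fun ?_)
    · intro n
      simp only [hf]
      rw [show (1/4 * ((2 * (2 * n) + 1 : ℕ) : ℂ) + 1) = ((1/4 : ℝ) : ℂ) + n + 1 by push_cast; ring,
        hp (1/4) (2 * (2 * n) + 1) n (by push_cast; ring), Odd.neg_pow ⟨2 * n, rfl⟩, neg_div]
      push_cast
      rfl
    · intro n
      simp only [hf]
      rw [show (1/4 * ((2 * (2 * n + 1) + 1 : ℕ) : ℂ) + 1) = ((3/4 : ℝ) : ℂ) + n + 1 by push_cast; ring,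
        hp (3/4) (2 * (2 * n + 1) + 1) n (by push_cast; ring), Odd.neg_pow ⟨2 * n + 1, rfl⟩, neg_div]
      push_cast
      rfl
  have := (he.even_add_odd ho).tsum_eq
  rw [mittagLeffler, this, MLE, MLQ, MLQ, MLQ]
  push_cast
  ring

lemma MLE_cont : Continuous MLE := by
  have h1 := MLQ_cont (a := 1/4) (by norm_num)
  have h2 := MLQ_cont (a := 1/2) (by norm_num)
  have h3 := MLQ_cont (a := 3/4) (by norm_num)
  unfold MLE
  fun_prop

lemma MLE_bound : ∃ C : ℝ, 0 ≤ C ∧ ∀ u : ℝ, 0 < u → |MLE u| ≤ C / (1 + u) := by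
  have g1 := Real.Gamma_pos_of_pos (s := 1/4) (by norm_num)
  have g2 := Real.Gamma_pos_of_pos (s := 1/2) (by norm_num)
  have g3 := Real.Gamma_pos_of_pos (s := 3/4) (by norm_num)
  have hb : ∀ a : ℝ, 0 < a → a ≤ 3/4 → ∀ u : ℝ, 0 < u →
      0 ≤ MLQ a (u ^ 4) ∧ MLQ a (u ^ 4) ≤ (2 * Real.exp 1 + 2 / Real.Gamma a) / (1 + u) := by
    intro a ha ha1 u hu
    have g := Real.Gamma_pos_of_pos ha
    refine ⟨MLQ_nonneg ha (by positivity), ?_⟩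
    rw [le_div_iff₀ (by positivity)]
    have hq0 := MLQ_nonneg ha (x := u ^ 4) (by positivity)
    have g' : 0 < 2 / Real.Gamma a := by positivity
    rcases le_total u 1 with h | h
    · have h1 : MLQ a (u ^ 4) ≤ Real.exp 1 :=
        (MLQ_le_exp ha (by positivity)).trans (Real.exp_le_exp.2 (pow_le_one₀ hu.le h))
      nlinarith
    · have h1 : MLQ a (u ^ 4) ≤ u⁻¹ / Real.Gamma a := by
        refine (MLQ_le ha (by linarith) (by positivity)).trans ?_
        gcongr
        rw [← Real.rpow_natCast u 4, ← Real.rpow_mul hu.le, ← Real.rpow_neg_one]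
        refine Real.rpow_le_rpow_of_exponent_le h ?_
        push_cast; linarith
      have h2 : MLQ a (u ^ 4) * (1 + u) ≤ u⁻¹ / Real.Gamma a * (2 * u) := by
        gcongr; linarith
      have h3 : u⁻¹ / Real.Gamma a * (2 * u) = 2 / Real.Gamma a := by field_simp
      have := Real.exp_pos 1
      linarith
  refine ⟨(2 * Real.exp 1 + 2 / Real.Gamma (1/4)) + (2 * Real.exp 1 + 2 / Real.Gamma (1/2)) + (2 * Real.exp 1 + 2 / Real.Gamma (3/4)), by positivity, fun u hu => ?_⟩
  obtain ⟨a1, b1⟩ := hb (1/4) (by norm_num) (by norm_num) u hu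
  obtain ⟨a2, b2⟩ := hb (1/2) (by norm_num) (by norm_num) u hu
  obtain ⟨a3, b3⟩ := hb (3/4) (by norm_num) (by norm_num) u hu
  rw [add_div, add_div, abs_le, MLE]
  constructor <;> linarith

lemma MLE_laplace {t : ℝ} (ht : 0 < t) (ht1 : t ≠ 1) :
    ∫ x in Ioi (0:ℝ), Real.exp (-x) * MLE (x ^ (1/4 : ℝ) * t) = 1 / (1 + t) := by
  have hT : 0 < t ^ 4 := by positivity
  have hT1 : t ^ 4 ≠ 1 := by
    intro h
    exact ht1 ((pow_eq_one_iff_of_nonneg ht.le (by norm_num)).1 h)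
  have i1 := MLQ_laplace_int (a := 1/4) (by norm_num) (by norm_num) hT
  have i2 := MLQ_laplace_int (a := 1/2) (by norm_num) (by norm_num) hT
  have i3 := MLQ_laplace_int (a := 3/4) (by norm_num) (by norm_num) hT
  have e : ∀ x ∈ Ioi (0:ℝ), Real.exp (-x) * MLE (x ^ (1/4 : ℝ) * t) =
      Real.exp (-x) * MLQ (1/4) (t ^ 4 * x) - Real.exp (-x) * MLQ (1/2) (t ^ 4 * x) + Real.exp (-x) * MLQ (3/4) (t ^ 4 * x) := by
    intro x hx
    have hx : 0 < x := hx
    have : (x ^ (1/4 : ℝ) * t) ^ 4 = t ^ 4 * x := by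
      rw [mul_pow, ← Real.rpow_natCast (x ^ (1/4:ℝ)), ← Real.rpow_mul hx.le]
      norm_num; ring
    rw [MLE, this]; ring
  have i12 : IntegrableOn (fun x => Real.exp (-x) * MLQ (1/4) (t ^ 4 * x) - Real.exp (-x) * MLQ (1/2) (t ^ 4 * x)) (Ioi 0) := i1.sub i2
  rw [setIntegral_congr_fun measurableSet_Ioi e, integral_add i12 i3, integral_sub i1 i2,
    MLQ_laplace (by norm_num) (by norm_num) hT hT1, MLQ_laplace (by norm_num) (by norm_num) hT hT1,
    MLQ_laplace (by norm_num) (by norm_num) hT hT1]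
  have p1 : (t ^ 4 : ℝ) ^ (1/4 : ℝ) = t := by
    rw [← Real.rpow_natCast t 4, ← Real.rpow_mul ht.le]; norm_num
  have p2 : (t ^ 4 : ℝ) ^ (1/2 : ℝ) = t ^ 2 := by
    rw [← Real.rpow_natCast t 4, ← Real.rpow_mul ht.le, ← Real.rpow_natCast]; norm_num
  have p3 : (t ^ 4 : ℝ) ^ (3/4 : ℝ) = t ^ 3 := by
    rw [← Real.rpow_natCast t 4, ← Real.rpow_mul ht.le, ← Real.rpow_natCast]; norm_num
  rw [p1, p2, p3]
  have h1 : t ^ 4 - 1 ≠ 0 := sub_ne_zero.2 hT1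
  field_simp
  ring


lemma ML_inner (k : ℂ) {x : ℝ} (hx : 0 < x) :
    (∫ u in Ioi (0 : ℝ), Complex.exp (-(x : ℂ)) * mittagLeffler (1 / 4) (-(u : ℂ)) *
          Complex.log (I * u * (x : ℂ) ^ (-(1 / 4 : ℂ))) ^ k /
            ((u : ℂ) ^ (1 / 2 : ℂ) * (x : ℂ) ^ (1 / 8 : ℂ)))
    = ∫ t in Ioi (0:ℝ), ((Real.exp (-x) * MLE (x ^ (1/4:ℝ) * t) : ℝ) : ℂ) *
        (Complex.log (I * t) ^ k * ((t ^ (-(1/2) : ℝ) : ℝ) : ℂ)) := by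
  have hc : 0 < x ^ (1/4 : ℝ) := by positivity
  have h := integral_comp_mul_left_Ioi' (fun u : ℝ => Complex.exp (-(x : ℂ)) * mittagLeffler (1 / 4) (-(u : ℂ)) *
          Complex.log (I * u * (x : ℂ) ^ (-(1 / 4 : ℂ))) ^ k /
            ((u : ℂ) ^ (1 / 2 : ℂ) * (x : ℂ) ^ (1 / 8 : ℂ))) 0 hc
  rw [mul_zero] at h
  rw [← h, ← integral_smul]
  refine setIntegral_congr_fun measurableSet_Ioi (fun t ht => ?_)
  have ht : 0 < t := ht
  have hct : 0 < x ^ (1/4 : ℝ) * t := by positivity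
  have e1 : (x : ℂ) ^ (-(1 / 4 : ℂ)) = ((x ^ (-(1/4) : ℝ) : ℝ) : ℂ) := by
    rw [Complex.ofReal_cpow hx.le]; push_cast; rfl
  have e2 : I * ((x ^ (1/4 : ℝ) * t : ℝ) : ℂ) * ((x ^ (-(1/4) : ℝ) : ℝ) : ℂ) = I * t := by
    rw [mul_assoc, ← Complex.ofReal_mul, mul_right_comm, ← Real.rpow_add hx]
    norm_num
  have e3 : ((x ^ (1/4 : ℝ) * t : ℝ) : ℂ) ^ (1 / 2 : ℂ) * (x : ℂ) ^ (1 / 8 : ℂ)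
      = ((x ^ (1/4 : ℝ) * t ^ (1/2 : ℝ) : ℝ) : ℂ) := by
    have a1 : (1 / 2 : ℂ) = ((1/2 : ℝ) : ℂ) := by push_cast; rfl
    have a2 : (1 / 8 : ℂ) = ((1/8 : ℝ) : ℂ) := by push_cast; rfl
    rw [a1, a2, ← Complex.ofReal_cpow hct.le, ← Complex.ofReal_cpow hx.le, ← Complex.ofReal_mul]
    congr 1
    rw [Real.mul_rpow hc.le ht.le, ← Real.rpow_mul hx.le, mul_right_comm, ← Real.rpow_add hx]
    norm_num
  rw [e1, e2, e3, ML_eq hct, Complex.real_smul, Real.rpow_neg ht.le]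
  have hc' : ((x ^ (1/4 : ℝ) : ℝ) : ℂ) ≠ 0 := by exact_mod_cast hc.ne'
  have ht' : ((t ^ (1/2 : ℝ) : ℝ) : ℂ) ≠ 0 := by exact_mod_cast (by positivity : 0 < t ^ (1/2:ℝ)).ne'
  push_cast
  field_simp

lemma ML_bd {x t C : ℝ} (hx : 0 < x) (ht : 0 < t) (hC : 0 ≤ C)
    (h : |MLE (x ^ (1/4:ℝ) * t)| ≤ C / (1 + x ^ (1/4:ℝ) * t)) :
    |MLE (x ^ (1/4:ℝ) * t)| ≤ C * (1 + x ^ (-(1/4):ℝ)) / (1 + t) := by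
  refine h.trans ?_
  rw [Real.rpow_neg hx.le]
  have hc : 0 < x ^ (1/4 : ℝ) := by positivity
  generalize x ^ (1/4 : ℝ) = c at *
  rw [div_le_div_iff₀ (by positivity) (by positivity), mul_assoc]
  refine mul_le_mul_of_nonneg_left ?_ hC
  have : (1 + c⁻¹) * (1 + c * t) = 1 + t + c * t + c⁻¹ := by field_simp; ring
  rw [this]
  have : 0 < c * t := by positivity
  have : 0 < c⁻¹ := by positivity
  linarith

lemma ML_prod_int (k : ℂ) : Integrable (Function.uncurry fun (x t : ℝ) => ((Real.exp (-x) * MLE (x ^ (1/4:ℝ) * t) : ℝ) : ℂ) *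
        (Complex.log (I * t) ^ k * ((t ^ (-(1/2) : ℝ) : ℝ) : ℂ)))
    ((volume.restrict (Ioi 0)).prod (volume.restrict (Ioi 0))) := by
  obtain ⟨C, hC, hb⟩ := MLE_bound
  have hg : Integrable (fun x : ℝ => C * (Real.exp (-x) * (1 + x ^ (-(1/4):ℝ)))) (volume.restrict (Ioi 0)) := by
    refine Integrable.const_mul ?_ C
    have h1 := ML_cgamma_integrable (s := 1) one_pos one_pos
    have h2 := ML_cgamma_integrable (s := 3/4) (by norm_num) one_pos
    refine (h1.add h2).congr_fun (fun x hx => ?_) measurableSet_Ioi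
    norm_num
    ring
  have hi := Integrable.mul_prod hg (MLPhi_int k).norm
  refine Integrable.mono' hi ?_ ?_
  · refine Measurable.aestronglyMeasurable ?_
    unfold Function.uncurry
    have hm := MLE_cont.measurable
    refine Measurable.mul (Complex.measurable_ofReal.comp ?_) (Measurable.mul ?_ (Complex.measurable_ofReal.comp ?_))
    · exact Measurable.mul (by fun_prop) (hm.comp (by fun_prop))
    · exact (MLlog_meas k).comp measurable_snd
    · fun_prop
  · rw [Measure.prod_restrict]
    filter_upwards [ae_restrict_mem (measurableSet_Ioi.prod measurableSet_Ioi)] with p hp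
    obtain ⟨x, t⟩ := p
    have hx : 0 < x := hp.1
    have ht : 0 < t := hp.2
    simp only [Function.uncurry]
    have h := ML_bd hx ht hC (hb _ (by positivity))
    rw [norm_mul, norm_mul, norm_mul, Complex.norm_real, Complex.norm_real, Complex.norm_real,
      Real.norm_of_nonneg (MLw_nonneg ht), norm_mul, Real.norm_of_nonneg (Real.exp_pos _).le, Real.norm_eq_abs,
      Real.norm_of_nonneg (by positivity : 0 ≤ t ^ (-(1/2) : ℝ)), MLw]
    calc _ ≤ Real.exp (-x) * (C * (1 + x ^ (-(1/4):ℝ)) / (1 + t)) * (‖Complex.log (I * t) ^ k‖ * t ^ (-(1/2) : ℝ)) := by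
            gcongr
      _ = _ := by ring

theorem double_integral_mittagLeffler_HurwitzZeta.hurwitzZeta (k : ℂ) :
    (∫ x in Ioi (0 : ℝ), ∫ u in Ioi (0 : ℝ),
        Complex.exp (-(x : ℂ)) * mittagLeffler (1 / 4) (-(u : ℂ)) *
          Complex.log (I * u * (x : ℂ) ^ (-(1 / 4 : ℂ))) ^ k /
            ((u : ℂ) ^ (1 / 2 : ℂ) * (x : ℂ) ^ (1 / 8 : ℂ)))
      = I ^ k * 2 ^ (2 * k + 1) * (π : ℂ) ^ (k + 1) *
          (HurwitzZeta.hurwitzZeta ((3 / 8 : ℝ) : UnitAddCircle) (-k) -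
            HurwitzZeta.hurwitzZeta ((7 / 8 : ℝ) : UnitAddCircle) (-k)) := by
  rw [setIntegral_congr_fun measurableSet_Ioi (fun x hx => ML_inner k hx),
    integral_integral_swap (ML_prod_int k), ← MLPhi_eq, MLPhi]
  refine integral_congr_ae ?_
  have h1 : ∀ᵐ t : ℝ ∂(volume.restrict (Ioi (0:ℝ))), t ≠ 1 :=
    ae_restrict_of_ae (Measure.ae_ne volume 1)
  filter_upwards [ae_restrict_mem measurableSet_Ioi, h1] with t ht ht1
  have ht : 0 < t := ht
  rw [integral_mul_const, integral_complex_ofReal, MLE_laplace ht ht1, MLw]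
  push_cast
  ring
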